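/- arXiv:1612.07607 — 2 statements merged into one kernel-verified Lean document; each statement's English description precedes it below -/
import Mathlib

section
/- Let ρ be a bipartite state on ℂ^{dA}⊗ℂ^{dB}, let α_1,…,α_n be unit vectors in ℂ^{dA}, let β_1,…,β_n be orthonormal vectors in ℂ^{dB}, and let p_1,…,p_n > 0 with Σ_{i=1}^n p_i = 1. If Tr_A[ρ(|α_i⟩⟨α_i|⊗I_B)] = p_i|β_i⟩⟨β_i| for every i, then the vectors α_1,…,α_n are pairwise orthogonal (hence the effects |α_i⟩⟨α_i| can be extended to a single non-degenerate projective measurement). -/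
/-!
Put `e k = α k ⊗ β k`. These vectors are orthonormal and `⟨e k, ρ (e k)⟩ = p k`, so the compression
of `ρ` to their span already has the full trace `∑ p k = 1 = tr ρ`. By positivity `ρ` then
annihilates every vector orthogonal to all the `e k`.

For `i ≠ j` put `u = α j ⊗ β i` and `c = ⟨α i, α j⟩`. The vector `u - c e i` is orthogonal to all
the `e k`, so `ρ u = c ρ (e i)`. But `⟨u, ρ u⟩ = p j |⟨β i, β j⟩|² = 0`, so `ρ u = 0` by positivity.
Pairing with `e i` gives `c * p i = 0`, hence `c = 0`.
-/

open scoped BigOperators Kronecker Classical ComplexOrder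

namespace EPR

noncomputable section

/-- Complex inner product `⟨u, v⟩ = ∑ conj (u a) * v a` (conjugate-linear in the first slot). -/
def cinner {ι : Type*} [Fintype ι] (u v : ι → ℂ) : ℂ :=
  ∑ a, (starRingEnd ℂ) (u a) * v a

/-- `u` is a unit vector. -/
def IsUnitVec {ι : Type*} [Fintype ι] (u : ι → ℂ) : Prop := cinner u u = 1

/-- Rank-one projection `|u⟩⟨u|`, with entries `u k * conj (u l)`. -/
def proj {ι : Type*} [Fintype ι] (u : ι → ℂ) : Matrix ι ι ℂ :=
  Matrix.of fun k l => u k * (starRingEnd ℂ) (u l)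

/-- Rank-one operator `|u⟩⟨v|`, with entries `u k * conj (v l)`. -/
def outer {ι : Type*} [Fintype ι] (u v : ι → ℂ) : Matrix ι ι ℂ :=
  Matrix.of fun k l => u k * (starRingEnd ℂ) (v l)

/-- A state: positive semidefinite matrix of trace 1. -/
def IsState {ι : Type*} [Fintype ι] (ρ : Matrix ι ι ℂ) : Prop :=
  ρ.PosSemidef ∧ ρ.trace = 1

/-- An effect: `0 ≤ E ≤ I` in the Loewner order. -/
def IsEffect {d : ℕ} (E : Matrix (Fin d) (Fin d) ℂ) : Prop :=
  E.PosSemidef ∧ (1 - E).PosSemidef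

/-- Conditional state `Tr_A[ρ (E ⊗ I_B)]` of a bipartite state for an effect `E` on A:
entries `(E')_{b b'} = ∑_{a,a'} E_{a' a} ρ_{(a,b),(a',b')}`. -/
def condStateE {dA dB : ℕ} (ρ : Matrix (Fin dA × Fin dB) (Fin dA × Fin dB) ℂ)
    (E : Matrix (Fin dA) (Fin dA) ℂ) : Matrix (Fin dB) (Fin dB) ℂ :=
  Matrix.of fun b b' => ∑ a, ∑ a', E a' a * ρ (a, b) (a', b')

/-- Conditional state `Tr_A[ρ (|α⟩⟨α| ⊗ I_B)]` for a non-degenerate projective effect: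
entries `∑_{a,a'} conj (α a) * α a' * ρ_{(a,b),(a',b')}`. -/
def condState {dA dB : ℕ} (ρ : Matrix (Fin dA × Fin dB) (Fin dA × Fin dB) ℂ)
    (α : Fin dA → ℂ) : Matrix (Fin dB) (Fin dB) ℂ :=
  Matrix.of fun b b' => ∑ a, ∑ a', (starRingEnd ℂ) (α a) * α a' * ρ (a, b) (a', b')

/-- Tensor product vector `α ⊗ β` in `ℂ^{dA} ⊗ ℂ^{dB}`. -/
def tensor2 {dA dB : ℕ} (α : Fin dA → ℂ) (β : Fin dB → ℂ) : Fin dA × Fin dB → ℂ :=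
  fun p => α p.1 * β p.2

/-- Tensor product vector `α ⊗ β ⊗ γ` in `ℂ^{dA} ⊗ ℂ^{dB} ⊗ ℂ^{dC}`. -/
def tensor3 {dA dB dC : ℕ} (α : Fin dA → ℂ) (β : Fin dB → ℂ) (γ : Fin dC → ℂ) :
    Fin dA × Fin dB × Fin dC → ℂ :=
  fun p => α p.1 * β p.2.1 * γ p.2.2

/-- Reduced state of a tripartite pure state on AB:
`(ρ_Ψ)_{(a,b),(a',b')} = ∑_c Ψ_{a,b,c} conj (Ψ_{a',b',c})`. -/
def reducedAB {dA dB dC : ℕ} (Ψ : Fin dA × Fin dB × Fin dC → ℂ) :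
    Matrix (Fin dA × Fin dB) (Fin dA × Fin dB) ℂ :=
  Matrix.of fun p q => ∑ c, Ψ (p.1, p.2, c) * (starRingEnd ℂ) (Ψ (q.1, q.2, c))

/-- Partial contraction `⟨α|Ψ⟩ ∈ ℂ^{dB} ⊗ ℂ^{dC}`, with components
`∑_a conj (α a) Ψ_{a,b,c}`. -/
def aContract {dA dB dC : ℕ} (α : Fin dA → ℂ) (Ψ : Fin dA × Fin dB × Fin dC → ℂ) :
    Fin dB × Fin dC → ℂ :=
  fun p => ∑ a, (starRingEnd ℂ) (α a) * Ψ (a, p.1, p.2)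

/-- A family of vectors is orthonormal. For `n = d` this is an orthonormal basis of `ℂ^d`. -/
def OrthonormalFam {d n : ℕ} (α : Fin n → Fin d → ℂ) : Prop :=
  ∀ i j, cinner (α i) (α j) = if i = j then 1 else 0

/-- `ρ` is unsteerable from Alice's side for non-degenerate projective measurements:
there is a finite local-hidden-state ensemble reproducing all conditional states of
every non-degenerate projective measurement (orthonormal basis) on A. -/
def Unsteerable {dA dB : ℕ} (ρ : Matrix (Fin dA × Fin dB) (Fin dA × Fin dB) ℂ) : Prop :=
  ∃ (n : ℕ) (P : Fin n → ℝ) (σ : Fin n → Matrix (Fin dB) (Fin dB) ℂ),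
    (∀ ξ, 0 ≤ P ξ) ∧ (∑ ξ, P ξ = 1) ∧ (∀ ξ, IsState (σ ξ)) ∧
    ∀ α : Fin dA → Fin dA → ℂ, OrthonormalFam α →
      ∃ Q : Fin dA → Fin n → ℝ,
        (∀ a ξ, 0 ≤ Q a ξ ∧ Q a ξ ≤ 1) ∧ (∀ ξ, ∑ a, Q a ξ = 1) ∧
        ∀ a, condState ρ (α a) = ∑ ξ, ((Q a ξ * P ξ : ℝ) : ℂ) • σ ξ

/-- `ρ` is separable: a finite convex-type combination of product states. -/
def Separable {dA dB : ℕ} (ρ : Matrix (Fin dA × Fin dB) (Fin dA × Fin dB) ℂ) : Prop :=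
  ∃ (n : ℕ) (q : Fin n → ℝ) (ρA : Fin n → Matrix (Fin dA) (Fin dA) ℂ)
    (ρB : Fin n → Matrix (Fin dB) (Fin dB) ℂ),
    (∀ k, 0 ≤ q k) ∧ (∀ k, IsState (ρA k)) ∧ (∀ k, IsState (ρB k)) ∧
    ρ = ∑ k, ((q k : ℂ)) • (ρA k ⊗ₖ ρB k)

/-- A local hidden state model for an assemblage `As`, with outcomes `A`, measurement
labels `X`, hidden states `σ` with weights `P`, and response probabilities `R`. -/
def LHSModel {dB : ℕ} {A X : Type*} [Fintype A] {n : ℕ}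
    (As : A → X → Matrix (Fin dB) (Fin dB) ℂ)
    (P : Fin n → ℝ) (σ : Fin n → Matrix (Fin dB) (Fin dB) ℂ)
    (R : A → X → Fin n → ℝ) : Prop :=
  (∀ ξ, 0 ≤ P ξ) ∧ (∑ ξ, P ξ = 1) ∧ (∀ ξ, IsState (σ ξ)) ∧
  (∀ a x ξ, 0 ≤ R a x ξ ∧ R a x ξ ≤ 1) ∧ (∀ x ξ, ∑ a, R a x ξ = 1) ∧
  (∀ a x, As a x = ∑ ξ, ((R a x ξ * P ξ : ℝ) : ℂ) • σ ξ)

/-- Standard basis vector of `ℂ^d`. -/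
def stdb {d : ℕ} (a : Fin d) : Fin d → ℂ := fun i => if i = a then 1 else 0

open Matrix

section Compression

variable {ι κ : Type*} [Fintype ι] [Fintype κ] [DecidableEq κ]

lemma trace_compression_compl {R : Type*} [CommRing R] [StarRing R] [DecidableEq ι]
    (ρ : Matrix ι ι R) {E : Matrix ι κ R} (hE : Eᴴ * E = 1) :
    ((1 - E * Eᴴ)ᴴ * ρ * (1 - E * Eᴴ)).trace = ρ.trace - (Eᴴ * ρ * E).trace := by
  have hQ_herm : (1 - E * Eᴴ)ᴴ = 1 - E * Eᴴ := by simp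
  have hP_idem : IsIdempotentElem (E * Eᴴ) := by
    rw [IsIdempotentElem, Matrix.mul_assoc, ← Matrix.mul_assoc Eᴴ, hE, Matrix.one_mul]
  calc ((1 - E * Eᴴ)ᴴ * ρ * (1 - E * Eᴴ)).trace
      = ((1 - E * Eᴴ) * ρ).trace := by
        rw [hQ_herm, trace_mul_comm, ← Matrix.mul_assoc, hP_idem.one_sub.eq]
    _ = ρ.trace - (Eᴴ * ρ * E).trace := by
        rw [Matrix.sub_mul, Matrix.one_mul, trace_sub, Matrix.mul_assoc, trace_mul_comm E]

lemma mulVec_eq_zero_of_trace_compression_eq {𝕜 : Type*} [RCLike 𝕜] {ρ : Matrix ι ι 𝕜}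
    (hρ : ρ.PosSemidef) {E : Matrix ι κ 𝕜} (hE : Eᴴ * E = 1)
    (htr : (Eᴴ * ρ * E).trace = ρ.trace) {w : ι → 𝕜} (hw : Eᴴ *ᵥ w = 0) : ρ *ᵥ w = 0 := by
  have hcompl : (1 - E * Eᴴ)ᴴ * ρ * (1 - E * Eᴴ) = 0 := by
    rw [← (hρ.conjTranspose_mul_mul_same _).trace_eq_zero_iff, trace_compression_compl ρ hE,
      htr, sub_self]
  have hw_compl : (1 - E * Eᴴ) *ᵥ w = w := by
    rw [sub_mulVec, one_mulVec, ← mulVec_mulVec, hw, mulVec_zero, sub_zero]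
  rw [← hρ.dotProduct_mulVec_zero_iff]
  calc star w ⬝ᵥ ρ *ᵥ w
      = star ((1 - E * Eᴴ) *ᵥ w) ⬝ᵥ ρ *ᵥ ((1 - E * Eᴴ) *ᵥ w) := by rw [hw_compl]
    _ = star w ⬝ᵥ ((1 - E * Eᴴ)ᴴ * ρ * (1 - E * Eᴴ)) *ᵥ w := by
        rw [star_mulVec, ← dotProduct_mulVec, mulVec_mulVec, mulVec_mulVec, Matrix.mul_assoc]
    _ = 0 := by rw [hcompl, zero_mulVec, dotProduct_zero]

end Compression

section Cinner

variable {ι κ : Type*} [Fintype ι]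

lemma cinner_eq_star_dotProduct (u v : ι → ℂ) : cinner u v = star u ⬝ᵥ v := rfl

lemma cinner_sub_right (u v w : ι → ℂ) : cinner u (v - w) = cinner u v - cinner u w :=
  dotProduct_sub _ _ _

lemma cinner_smul_right (c : ℂ) (u v : ι → ℂ) : cinner u (c • v) = c * cinner u v :=
  dotProduct_smul _ _ _

lemma proj_mulVec (u v : ι → ℂ) : proj u *ᵥ v = cinner u v • u := by
  ext k
  simp [proj, cinner, mulVec, dotProduct, Finset.sum_mul, mul_assoc, mul_comm (u k)]

lemma mulVec_eq_zero_of_sum_cinner_eq_trace [Fintype κ] [DecidableEq κ] {ρ : Matrix ι ι ℂ}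
    (hρ : ρ.PosSemidef) {e : κ → ι → ℂ}
    (he : ∀ k l, cinner (e k) (e l) = if k = l then 1 else 0)
    (htr : ∑ k, cinner (e k) (ρ *ᵥ e k) = ρ.trace)
    {w : ι → ℂ} (hw : ∀ k, cinner (e k) w = 0) : ρ *ᵥ w = 0 := by
  refine mulVec_eq_zero_of_trace_compression_eq (E := (of e)ᵀ) hρ ?_ ?_ (funext hw)
  · ext k l
    exact (he k l).trans one_apply.symm
  · rw [← htr, Matrix.mul_assoc]
    rfl

end Cinner

section Steering

variable {dA dB : ℕ} {ρ : Matrix (Fin dA × Fin dB) (Fin dA × Fin dB) ℂ}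
  {α : Fin dA → ℂ} {β : Fin dB → ℂ} {c : ℂ}

lemma cinner_tensor2 (α α' : Fin dA → ℂ) (β β' : Fin dB → ℂ) :
    cinner (tensor2 α β) (tensor2 α' β') = cinner α α' * cinner β β' := by
  simp only [cinner, tensor2, Fintype.sum_prod_type, Finset.sum_mul_sum, map_mul, mul_mul_mul_comm]

lemma cinner_tensor2_mulVec_tensor2 (ρ : Matrix (Fin dA × Fin dB) (Fin dA × Fin dB) ℂ)
    (α : Fin dA → ℂ) (β γ : Fin dB → ℂ) :
    cinner (tensor2 α β) (ρ *ᵥ tensor2 α γ) = cinner β (condState ρ α *ᵥ γ) := by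
  simp only [cinner, tensor2, condState, mulVec, dotProduct, Fintype.sum_prod_type_right, map_mul,
    Finset.mul_sum, Finset.sum_mul, of_apply]
  refine Finset.sum_congr rfl fun b _ => ?_
  rw [Finset.sum_comm]
  refine Finset.sum_congr rfl fun b' _ => Finset.sum_congr rfl fun a _ =>
    Finset.sum_congr rfl fun a' _ => ?_
  ring

lemma cinner_tensor2_mulVec_tensor2_of_condState_eq (h : condState ρ α = c • proj β)
    (γ δ : Fin dB → ℂ) :
    cinner (tensor2 α γ) (ρ *ᵥ tensor2 α δ) = c * (cinner β δ * cinner γ β) := by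
  rw [cinner_tensor2_mulVec_tensor2, h, smul_mulVec, cinner_smul_right, proj_mulVec,
    cinner_smul_right]

lemma mulVec_tensor2_eq_zero_of_cinner_eq_zero (hρ : ρ.PosSemidef)
    (h : condState ρ α = c • proj β) {γ : Fin dB → ℂ} (hγ : cinner β γ = 0) :
    ρ *ᵥ tensor2 α γ = 0 := by
  rw [← hρ.dotProduct_mulVec_zero_iff, ← cinner_eq_star_dotProduct,
    cinner_tensor2_mulVec_tensor2_of_condState_eq h, hγ, zero_mul, mul_zero]

lemma cinner_tensor2_of_orthonormalFam {n : ℕ} {α : Fin n → Fin dA → ℂ}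
    (hα : ∀ i, IsUnitVec (α i)) {β : Fin n → Fin dB → ℂ} (hβ : OrthonormalFam β) (k l : Fin n) :
    cinner (tensor2 (α k) (β k)) (tensor2 (α l) (β l)) = if k = l then 1 else 0 := by
  rw [cinner_tensor2, hβ]
  split_ifs with hkl
  · rw [hkl, hα l, mul_one]
  · rw [mul_zero]

end Steering

/-- pure steered states that are orthogonal and have steering
probabilities summing to 1 force the corresponding effect vectors `α_i` to be
pairwise orthogonal. -/
theorem stmt5 {dA dB n : ℕ} (ρ : Matrix (Fin dA × Fin dB) (Fin dA × Fin dB) ℂ)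
    (hρ : IsState ρ)
    (α : Fin n → Fin dA → ℂ) (hα : ∀ i, IsUnitVec (α i))
    (β : Fin n → Fin dB → ℂ) (hβ : OrthonormalFam β)
    (p : Fin n → ℝ) (hp : ∀ i, 0 < p i) (hsum : ∑ i, p i = 1)
    (h : ∀ i, condState ρ (α i) = (p i : ℂ) • proj (β i)) :
    ∀ i j, i ≠ j → cinner (α i) (α j) = 0 := by
  intro i j hij
  set e := fun k => tensor2 (α k) (β k)
  set c := cinner (α i) (α j)
  have he : ∀ k l, cinner (e k) (e l) = if k = l then 1 else 0 :=
    cinner_tensor2_of_orthonormalFam hα hβ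
  have hdiag : ∀ k, cinner (e k) (ρ *ᵥ e k) = p k := fun k => by
    rw [cinner_tensor2_mulVec_tensor2_of_condState_eq (h k), hβ, if_pos rfl, mul_one, mul_one]
  have htr : ∑ k, cinner (e k) (ρ *ᵥ e k) = ρ.trace := by
    rw [Finset.sum_congr rfl fun k _ => hdiag k, hρ.2]
    exact_mod_cast hsum
  have hcross : ρ *ᵥ tensor2 (α j) (β i) = 0 :=
    mulVec_tensor2_eq_zero_of_cinner_eq_zero hρ.1 (h j) (by rw [hβ, if_neg hij.symm])
  have horth : ∀ k, cinner (e k) (tensor2 (α j) (β i) - c • e i) = 0 := fun k => by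
    rw [cinner_sub_right, cinner_smul_right, he, cinner_tensor2, hβ]
    split_ifs with hki <;> simp [c, hki]
  have hker : c • (ρ *ᵥ e i) = 0 := by
    simpa [mulVec_sub, mulVec_smul, hcross] using
      mulVec_eq_zero_of_sum_cinner_eq_trace hρ.1 he htr horth
  have hcp : c * p i = 0 := by
    rw [← hdiag i, ← cinner_smul_right, hker, cinner_eq_star_dotProduct, dotProduct_zero]
  exact (mul_eq_zero.mp hcp).resolve_right (by exact_mod_cast (hp i).ne')

end

end EPR
end

section
/- Let {A'_{a|x}} be an assemblage of positive semidefinite dB×dB matrices. Suppose there are pairs (a_1,x_1),…,(a_m,x_m), unit vectors β_1,…,β_m with pairwise distinct projections |β_k⟩⟨β_k|, and p_1,…,p_m > 0 with Σ_{k=1}^m p_k > 1, such that A'_{a_k|x_k} = p_k|β_k⟩⟨β_k| for each k. Then the assemblage admits no local hidden state model. -/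
/-!
A pure state spans an extreme ray of the positive semidefinite cone: `0 ≤ M ≤ q |β⟩⟨β|` forces `M`
to be a multiple of `|β⟩⟨β|`. Hence a hidden state `σ_ξ` that contributes to the assemblage member
`p_k |β_k⟩⟨β_k|` is `|β_k⟩⟨β_k|` itself, and, the projections being distinct, each `σ_ξ` contributes
to at most one such member, with weight at most `P(ξ)`. Comparing traces, `∑ p_k ≤ ∑ P(ξ) = 1`.
-/

open scoped BigOperators Kronecker Classical ComplexOrder

namespace EPR

noncomputable section

section

open Matrix
open scoped MatrixOrder

variable {ι κ Ξ : Type*} [Fintype ι] [Fintype κ] [Fintype Ξ]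

lemma proj_eq_vecMulVec (u : ι → ℂ) : proj u = vecMulVec u (star u) := rfl

lemma isHermitian_proj (u : ι → ℂ) : (proj u).IsHermitian :=
  (posSemidef_vecMulVec_self_star u).isHermitian

lemma proj_mul_mul_proj (u : ι → ℂ) (M : Matrix ι ι ℂ) :
    proj u * M * proj u = (star u ⬝ᵥ M *ᵥ u) • proj u := by
  rw [proj_eq_vecMulVec, Matrix.mul_assoc, mul_vecMulVec, vecMulVec_mul_vecMulVec, vecMulVec_smul]

lemma IsUnitVec.star_dotProduct_self {u : ι → ℂ} (hu : IsUnitVec u) : star u ⬝ᵥ u = 1 := hu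

lemma IsUnitVec.trace_proj {u : ι → ℂ} (hu : IsUnitVec u) : (proj u).trace = 1 := by
  rw [proj_eq_vecMulVec, trace_vecMulVec, dotProduct_comm, hu.star_dotProduct_self]

lemma IsUnitVec.isIdempotentElem_proj {u : ι → ℂ} (hu : IsUnitVec u) :
    IsIdempotentElem (proj u) := by
  rw [IsIdempotentElem, proj_eq_vecMulVec, vecMulVec_mul_vecMulVec, hu.star_dotProduct_self,
    one_smul]

lemma mulVec_eq_zero_of_le {𝕜 : Type*} [RCLike 𝕜] {M N : Matrix ι ι 𝕜} (hM : 0 ≤ M) (hMN : M ≤ N)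
    {v : ι → 𝕜} (hv : N *ᵥ v = 0) : M *ᵥ v = 0 := by
  rw [nonneg_iff_posSemidef] at hM
  rw [← hM.dotProduct_mulVec_zero_iff]
  have hform : 0 ≤ star v ⬝ᵥ (N - M) *ᵥ v := (le_iff.1 hMN).dotProduct_mulVec_nonneg v
  rw [sub_mulVec, hv, zero_sub, dotProduct_neg, neg_nonneg] at hform
  exact hform.antisymm (hM.dotProduct_mulVec_nonneg v)

lemma IsUnitVec.mul_proj_of_le {u : ι → ℂ} (hu : IsUnitVec u) {M : Matrix ι ι ℂ} {q : ℂ}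
    (hM : 0 ≤ M) (hle : M ≤ q • proj u) : M * proj u = M := by
  suffices hcompl : M * (1 - proj u) = 0 by
    rw [Matrix.mul_sub, Matrix.mul_one, sub_eq_zero] at hcompl
    exact hcompl.symm
  refine ext_of_mulVec_single fun j => ?_
  rw [← mulVec_mulVec, zero_mulVec]
  refine mulVec_eq_zero_of_le hM hle ?_
  rw [mulVec_mulVec, smul_mul, hu.isIdempotentElem_proj.mul_one_sub_self, smul_zero, zero_mulVec]

lemma IsUnitVec.eq_trace_smul_proj_of_mul_proj {u : ι → ℂ} (hu : IsUnitVec u) {M : Matrix ι ι ℂ}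
    (hM : M.IsHermitian) (hright : M * proj u = M) : M = M.trace • proj u := by
  have hleft : proj u * M = M := by
    simpa only [conjTranspose_mul, hM.eq, (isHermitian_proj u).eq]
      using congrArg conjTranspose hright
  have hmul : M = (star u ⬝ᵥ M *ᵥ u) • proj u := by
    rw [← proj_mul_mul_proj, hleft, hright]
  have htrace : M.trace = star u ⬝ᵥ M *ᵥ u := by
    simpa only [trace_smul, hu.trace_proj, smul_eq_mul, mul_one] using congrArg trace hmul
  rwa [htrace]

lemma IsUnitVec.eq_trace_smul_proj_of_le {u : ι → ℂ} (hu : IsUnitVec u) {M : Matrix ι ι ℂ} {q : ℂ}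
    (hM : 0 ≤ M) (hle : M ≤ q • proj u) : M = M.trace • proj u :=
  hu.eq_trace_smul_proj_of_mul_proj (nonneg_iff_posSemidef.1 hM).isHermitian
    (hu.mul_proj_of_le hM hle)

lemma IsUnitVec.eq_proj_of_smul_proj_eq_sum_smul {u : ι → ℂ} (hu : IsUnitVec u)
    {σ : Ξ → Matrix ι ι ℂ} (hσ : ∀ ξ, IsState (σ ξ)) {c : Ξ → ℝ} (hc : ∀ ξ, 0 ≤ c ξ) {q : ℂ}
    (hsum : q • proj u = ∑ ξ, (c ξ : ℂ) • σ ξ) {ξ : Ξ} (hξ : c ξ ≠ 0) : σ ξ = proj u := by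
  have hnonneg : ∀ η, 0 ≤ (c η : ℂ) • σ η := fun η =>
    nonneg_iff_posSemidef.2 ((hσ η).1.smul (Complex.zero_le_real.2 (hc η)))
  have hle : (c ξ : ℂ) • σ ξ ≤ q • proj u :=
    hsum ▸ Finset.single_le_sum (fun η _ => hnonneg η) (Finset.mem_univ ξ)
  have hray := hu.eq_trace_smul_proj_of_le (hnonneg ξ) hle
  rw [trace_smul, (hσ ξ).2, smul_eq_mul, mul_one] at hray
  exact smul_right_injective _ (Complex.ofReal_ne_zero.2 hξ) hray

lemma IsUnitVec.eq_sum_of_smul_proj_eq_sum_smul {u : ι → ℂ} (hu : IsUnitVec u)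
    {σ : Ξ → Matrix ι ι ℂ} (hσ : ∀ ξ, IsState (σ ξ)) {c : Ξ → ℝ} {q : ℝ}
    (hsum : (q : ℂ) • proj u = ∑ ξ, (c ξ : ℂ) • σ ξ) : q = ∑ ξ, c ξ := by
  have htrace := congrArg trace hsum
  simp only [trace_smul, trace_sum, hu.trace_proj, (hσ _).2, smul_eq_mul, mul_one] at htrace
  exact_mod_cast htrace

lemma sum_le_of_subsingleton_support {α : Type*} [AddCommMonoid α] [Preorder α] {f : κ → α} {b : α}
    (hb : 0 ≤ b) (hf : ∀ k, f k ≤ b) (hsupp : f.support.Subsingleton) : ∑ k, f k ≤ b := by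
  obtain hempty | ⟨k, hk⟩ := hsupp.eq_empty_or_singleton
  · simpa [Function.support_eq_empty_iff.1 hempty] using hb
  · rw [Fintype.sum_eq_single k fun l hl => Function.notMem_support.1 (by simpa [hk] using hl)]
    exact hf k

theorem stmt12_general {P : Ξ → ℝ} (hP : ∀ ξ, 0 ≤ P ξ)
    {σ : Ξ → Matrix ι ι ℂ} (hσ : ∀ ξ, IsState (σ ξ))
    {R : κ → Ξ → ℝ} (hR : ∀ k ξ, 0 ≤ R k ξ ∧ R k ξ ≤ 1)
    {β : κ → ι → ℂ} (hβ : ∀ k, IsUnitVec (β k)) (hdist : ∀ k l, k ≠ l → proj (β k) ≠ proj (β l))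
    {p : κ → ℝ} (h : ∀ k, (p k : ℂ) • proj (β k) = ∑ ξ, ((R k ξ * P ξ : ℝ) : ℂ) • σ ξ) :
    ∑ k, p k ≤ ∑ ξ, P ξ := by
  have hpure : ∀ k ξ, R k ξ * P ξ ≠ 0 → σ ξ = proj (β k) := fun k _ =>
    (hβ k).eq_proj_of_smul_proj_eq_sum_smul hσ (fun η => mul_nonneg (hR k η).1 (hP η)) (h k)
  have hsupp : ∀ ξ, (Function.support fun k => R k ξ * P ξ).Subsingleton := fun ξ k hk l hl =>
    not_imp_not.1 (hdist k l) ((hpure k ξ hk).symm.trans (hpure l ξ hl))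
  calc ∑ k, p k
      = ∑ k, ∑ ξ, R k ξ * P ξ :=
        Finset.sum_congr rfl fun k _ => (hβ k).eq_sum_of_smul_proj_eq_sum_smul hσ (h k)
    _ = ∑ ξ, ∑ k, R k ξ * P ξ := Finset.sum_comm
    _ ≤ ∑ ξ, P ξ := Finset.sum_le_sum fun ξ _ =>
        sum_le_of_subsingleton_support (hP ξ)
          (fun k => mul_le_of_le_one_left (hP ξ) (hR k ξ).2) (hsupp ξ)

end

/-- an assemblage containing pure members `p_k |β_k⟩⟨β_k|` with pairwise
distinct projections and `∑ p_k > 1` admits no local hidden state model. -/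
theorem stmt12 {dB m : ℕ} {A X : Type*} [Fintype A]
    (As : A → X → Matrix (Fin dB) (Fin dB) ℂ) (hAs : ∀ a x, (As a x).PosSemidef)
    (av : Fin m → A) (xv : Fin m → X)
    (β : Fin m → Fin dB → ℂ) (hβ : ∀ k, IsUnitVec (β k))
    (hdist : ∀ k l, k ≠ l → proj (β k) ≠ proj (β l))
    (p : Fin m → ℝ) (hp : ∀ k, 0 < p k) (hsum : 1 < ∑ k, p k)
    (h : ∀ k, As (av k) (xv k) = (p k : ℂ) • proj (β k)) :
    ¬ ∃ (n : ℕ) (P : Fin n → ℝ) (σ : Fin n → Matrix (Fin dB) (Fin dB) ℂ)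
        (R : A → X → Fin n → ℝ), LHSModel As P σ R := by
  rintro ⟨n, P, σ, R, hP, hPsum, hσ, hR, -, hmodel⟩
  exact hsum.not_ge (hPsum ▸ stmt12_general hP hσ (fun _ => hR _ _) hβ hdist
    fun k => (h k).symm.trans (hmodel _ _))

end

end EPR
end
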